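/- Let N ≥ 1 and let B, Σ ∈ ℂ^{N×N} be positive definite Hermitian matrices. Then the real number tr(Σ^{-1}B) satisfies tr(Σ^{-1}B) − ln det(Σ^{-1}B) ≥ N, with equality if and only if Σ = B. Equivalently, the function Σ ↦ −ln det(Σ) − tr(Σ^{-1}B), defined on the positive definite Hermitian matrices, attains its maximum value −ln det(B) − N uniquely at Σ = B. -/

import Mathlib

/-!
Write `S⁻¹ = Cᴴ * C` with `C` invertible. By cyclicity, `S⁻¹ * B` has the same trace and
determinant as the positive definite matrix `A = C * B * Cᴴ`, so everything reduces to
`tr A - ln det A ≥ N` with equality iff `A = 1`. In terms of the eigenvalues `λᵢ > 0` of `A` this is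
the sum of the scalar inequalities `ln λᵢ ≤ λᵢ - 1`, each strict unless `λᵢ = 1`. The statement
about `-ln det S - tr (S⁻¹ * B)` follows from `ln det (S⁻¹ * B) = ln det B - ln det S`.
-/

open Matrix ComplexOrder

noncomputable section

open scoped MatrixOrder Matrix.Norms.L2Operator in
theorem exists_isUnit_eq_conjTranspose_mul_self {n : Type*} [Fintype n] [DecidableEq n]
    {A : Matrix n n ℂ} (hA : A.PosDef) : ∃ C : Matrix n n ℂ, IsUnit C ∧ A = Cᴴ * C :=
  CStarAlgebra.isStrictlyPositive_iff_eq_star_mul_self.1 hA.isStrictlyPositive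

/-- The case `S = 1`: summing `log x ≤ x - 1` over the spectrum. -/
theorem trace_sub_log_det {n : Type*} [Fintype n] [DecidableEq n] {A : Matrix n n ℂ}
    (hA : A.PosDef) :
    (Fintype.card n : ℝ) ≤ A.trace.re - Real.log A.det.re ∧
      (A.trace.re - Real.log A.det.re = (Fintype.card n : ℝ) → A = 1) := by
  have htr : A.trace.re = ∑ i, hA.1.eigenvalues i := by
    rw [hA.1.trace_eq_sum_eigenvalues]
    simp
  have hdet : A.det.re = ∏ i, hA.1.eigenvalues i := by
    rw [hA.1.det_eq_prod_eigenvalues]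
    exact_mod_cast rfl
  have hdiff : A.trace.re - Real.log A.det.re - (Fintype.card n : ℝ)
      = ∑ i, (hA.1.eigenvalues i - 1 - Real.log (hA.1.eigenvalues i)) := by
    rw [htr, hdet, Real.log_prod (fun i _ => (hA.eigenvalues_pos i).ne')]
    simp [Finset.sum_sub_distrib]
    ring
  have hnn : ∀ i ∈ Finset.univ,
      0 ≤ hA.1.eigenvalues i - 1 - Real.log (hA.1.eigenvalues i) := fun i _ =>
    sub_nonneg.2 (Real.log_le_sub_one_of_pos (hA.eigenvalues_pos i))
  refine ⟨?_, fun h => ?_⟩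
  · have := Finset.sum_nonneg hnn
    linarith
  · have hzero := (Finset.sum_eq_zero_iff_of_nonneg hnn).1 (by rw [← hdiff, h, sub_self])
    have hone : hA.1.eigenvalues = 1 := by
      funext i
      by_contra hne
      have h1 := hzero i (Finset.mem_univ i)
      have h2 := Real.log_lt_sub_one_of_pos (hA.eigenvalues_pos i) hne
      linarith
    have hdiag : diagonal (RCLike.ofReal ∘ hA.1.eigenvalues) = (1 : Matrix n n ℂ) := by
      rw [hone, ← diagonal_one]
      congr 1
    rw [hA.1.spectral_theorem, hdiag, map_one]

/-- for positive definite Hermitian `B, Σ ∈ ℂ^{N×N}`,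
`tr(Σ⁻¹B) − ln det(Σ⁻¹B) ≥ N` with equality iff `Σ = B`; equivalently,
`Σ ↦ −ln det Σ − tr(Σ⁻¹B)` attains its maximum `−ln det B − N` uniquely at `Σ = B`. -/
theorem stmt_11 {N : ℕ} (hN : 1 ≤ N) (B S : Matrix (Fin N) (Fin N) ℂ)
    (hB : B.PosDef) (hS : S.PosDef) :
    ((N : ℝ) ≤ (S⁻¹ * B).trace.re - Real.log ((S⁻¹ * B).det.re) ∧
      ((S⁻¹ * B).trace.re - Real.log ((S⁻¹ * B).det.re) = (N : ℝ) ↔ S = B)) ∧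
    (-Real.log S.det.re - (S⁻¹ * B).trace.re ≤ -Real.log B.det.re - (N : ℝ) ∧
      (-Real.log S.det.re - (S⁻¹ * B).trace.re = -Real.log B.det.re - (N : ℝ) ↔ S = B)) := by
  have hSdet : IsUnit S.det := (isUnit_iff_isUnit_det S).1 hS.isUnit
  obtain ⟨C, hC, hSC⟩ : ∃ C : Matrix (Fin N) (Fin N) ℂ, IsUnit C ∧ S⁻¹ = Cᴴ * C :=
    exists_isUnit_eq_conjTranspose_mul_self hS.inv
  have hA : (C * B * Cᴴ).PosDef := hB.mul_mul_conjTranspose_same (vecMul_injective_of_isUnit hC)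
  have htr : (S⁻¹ * B).trace = (C * B * Cᴴ).trace := by
    rw [hSC, trace_mul_comm (C * B), Matrix.mul_assoc]
  have hdet : (S⁻¹ * B).det = (C * B * Cᴴ).det := by
    simp only [hSC, det_mul]
    ring
  obtain ⟨hle, heq⟩ := trace_sub_log_det hA
  rw [Fintype.card_fin, ← htr, ← hdet] at hle heq
  have hiff : (S⁻¹ * B).trace.re - Real.log ((S⁻¹ * B).det.re) = (N : ℝ) ↔ S = B := by
    refine ⟨fun h => ?_, ?_⟩
    · -- `C * (B * Cᴴ) = 1` forces `B * (Cᴴ * C) = 1`, so `B` inverts `S⁻¹`.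
      have h1 := heq h
      rw [Matrix.mul_assoc, mul_eq_one_comm, Matrix.mul_assoc, ← hSC] at h1
      calc S = (B * S⁻¹) * S := by rw [h1, Matrix.one_mul]
        _ = B := by rw [Matrix.mul_assoc, nonsing_inv_mul S hSdet, Matrix.mul_one]
    · rintro rfl
      simp [nonsing_inv_mul S hSdet]
  -- Positive definite matrices have real determinants, so taking real parts is multiplicative.
  have hlog : Real.log ((S⁻¹ * B).det.re) = Real.log B.det.re - Real.log S.det.re := by
    obtain ⟨hSre, hSim⟩ := Complex.pos_iff.1 hS.det_pos
    obtain ⟨hBre, hBim⟩ := Complex.pos_iff.1 hB.det_pos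
    have hmul : S.det * (S⁻¹ * B).det = B.det := by
      rw [← det_mul, ← Matrix.mul_assoc, mul_nonsing_inv S hSdet, Matrix.one_mul]
    have hre : S.det.re * (S⁻¹ * B).det.re = B.det.re := by
      rw [← hmul, Complex.mul_re, ← hSim]
      ring
    have hne : (S⁻¹ * B).det.re ≠ 0 := by
      intro h0
      rw [h0, mul_zero] at hre
      exact hBre.ne hre
    rw [← hre, Real.log_mul hSre.ne' hne]
    ring
  refine ⟨⟨hle, hiff⟩, by linarith, ?_⟩
  rw [← hiff]
  constructor <;> intro h <;> linarith

end
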